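/- arXiv:1601.05129 — 2 statements merged into one kernel-verified Lean document; each statement's English description precedes it below -/
import Mathlib

section
/- Let n ≥ 1, let A be a real symmetric positive definite n×n matrix, let b ∈ ℝⁿ, let x = A⁻¹b be the exact solution of Ax = b, and let z ∈ ℝⁿ be arbitrary with residual r = b − Az. Then ‖r‖₂²/‖A‖₂ ≤ (x−z)ᵀA(x−z) ≤ κ₂(A)·‖r‖₂²/‖A‖₂, i.e. the squared energy-norm error ‖x−z‖_A² is bounded below and above in terms of the Euclidean norm of the residual, the operator norm of A, and the condition number of A. -/
open Matrix

/-- The quadratic form of a real matrix is bounded by its Euclidean operator norm. -/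
theorem dotProduct_mulVec_le_norm_toEuclideanCLM {ι : Type*} [Fintype ι] [DecidableEq ι]
    (A : Matrix ι ι ℝ) (v : ι → ℝ) :
    v ⬝ᵥ A.mulVec v ≤ ‖Matrix.toEuclideanCLM (𝕜 := ℝ) A‖ * (v ⬝ᵥ v) := by
  have h_inner (u w : ι → ℝ) : inner ℝ (WithLp.toLp 2 u) (WithLp.toLp 2 w) = u ⬝ᵥ w := by
    simp [EuclideanSpace.inner_eq_star_dotProduct, dotProduct_comm]
  rw [← h_inner, ← h_inner v v, real_inner_self_eq_norm_mul_norm, ← toEuclideanCLM_toLp]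
  calc
    _ ≤ ‖WithLp.toLp 2 v‖ * ‖Matrix.toEuclideanCLM (𝕜 := ℝ) A (WithLp.toLp 2 v)‖ :=
      real_inner_le_norm _ _
    _ ≤ ‖WithLp.toLp 2 v‖ * (‖Matrix.toEuclideanCLM (𝕜 := ℝ) A‖ * ‖WithLp.toLp 2 v‖) := by
      gcongr
      exact ContinuousLinearMap.le_opNorm _ _
    _ = _ := by ring

/-- For a positive semidefinite `A`, `‖A e‖₂² / ‖A‖₂ ≤ eᵀ A e`. -/
theorem Matrix.PosSemidef.mulVec_dotProduct_mulVec_div_norm_le {ι : Type*} [Fintype ι]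
    [DecidableEq ι] {A : Matrix ι ι ℝ} (hA : A.PosSemidef) (e : ι → ℝ) :
    (A.mulVec e ⬝ᵥ A.mulVec e) / ‖Matrix.toEuclideanCLM (𝕜 := ℝ) A‖ ≤ e ⬝ᵥ A.mulVec e := by
  set c := ‖Matrix.toEuclideanCLM (𝕜 := ℝ) A‖ with hc
  set r := A.mulVec e with hr
  -- Nonnegativity of the quadratic form at `e - c⁻¹ • r`.
  have h_nonneg := hA.dotProduct_mulVec_nonneg (e - c⁻¹ • r)
  have h_symm : e ⬝ᵥ A.mulVec r = r ⬝ᵥ r := by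
    have hAT : Aᵀ = A := by simpa using hA.isHermitian.eq
    rw [dotProduct_mulVec, ← mulVec_transpose, hAT]
  have h_bound := mul_le_mul_of_nonneg_left (dotProduct_mulVec_le_norm_toEuclideanCLM A r)
    (sq_nonneg c⁻¹)
  have h_cancel : c⁻¹ ^ 2 * (c * (r ⬝ᵥ r)) = c⁻¹ * (r ⬝ᵥ r) := by
    by_cases h0 : c = 0
    · simp [h0]
    · field_simp
  rw [← hc, h_cancel] at h_bound
  simp only [star_trivial, mulVec_sub, mulVec_smul, sub_dotProduct, dotProduct_sub,
    smul_dotProduct, dotProduct_smul, smul_eq_mul, ← hr, h_symm] at h_nonneg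
  rw [div_eq_inv_mul]
  linarith

/-- **Residual-based bounds on the energy-norm error.** For a real symmetric positive
definite `n × n` matrix `A` (`n ≥ 1`), right-hand side `b`, exact solution
`x = A⁻¹ b`, an arbitrary approximation `z` with residual `r = b − A z`, the squared
energy-norm error `(x−z)ᵀA(x−z)` satisfies
`‖r‖₂²/‖A‖₂ ≤ (x−z)ᵀA(x−z) ≤ κ₂(A) ‖r‖₂²/‖A‖₂`, where `κ₂(A) = ‖A‖₂‖A⁻¹‖₂`. -/
theorem energy_error_residual_bounds
    (n : ℕ) (hn : 1 ≤ n) (A : Matrix (Fin n) (Fin n) ℝ) (hA : A.PosDef)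
    (b z x r : Fin n → ℝ) (hx : x = A⁻¹.mulVec b) (hr : r = b - A.mulVec z) :
    (r ⬝ᵥ r) / ‖Matrix.toEuclideanCLM (𝕜 := ℝ) A‖ ≤ (x - z) ⬝ᵥ A.mulVec (x - z) ∧
    (x - z) ⬝ᵥ A.mulVec (x - z) ≤
      (‖Matrix.toEuclideanCLM (𝕜 := ℝ) A‖ * ‖Matrix.toEuclideanCLM (𝕜 := ℝ) A⁻¹‖) *
        ((r ⬝ᵥ r) / ‖Matrix.toEuclideanCLM (𝕜 := ℝ) A‖) := by
  have hdet : IsUnit A.det := (A.isUnit_iff_isUnit_det).mp hA.isUnit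
  have h_res : A.mulVec (x - z) = r := by
    rw [hr, hx, mulVec_sub, mulVec_mulVec, mul_nonsing_inv _ hdet, one_mulVec]
  have h_err : x - z = A⁻¹.mulVec r := by
    rw [← h_res, mulVec_mulVec, nonsing_inv_mul _ hdet, one_mulVec]
  refine ⟨by simpa only [h_res] using hA.posSemidef.mulVec_dotProduct_mulVec_div_norm_le (x - z),
    ?_⟩
  by_cases h0 : ‖Matrix.toEuclideanCLM (𝕜 := ℝ) A‖ = 0
  · have hA0 : A = 0 := by simpa using h0
    simp [hA0]
  · calc
      (x - z) ⬝ᵥ A.mulVec (x - z) = r ⬝ᵥ A⁻¹.mulVec r := by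
        rw [h_res, h_err, dotProduct_comm]
      _ ≤ ‖Matrix.toEuclideanCLM (𝕜 := ℝ) A⁻¹‖ * (r ⬝ᵥ r) :=
        dotProduct_mulVec_le_norm_toEuclideanCLM _ _
      _ = _ := by field_simp
end

section
/- Let W be a real inner product space, let g, t ∈ W, and let a, C, β be real numbers with a ≥ 0, C ≥ 0, β > C, and ‖g‖² ≤ C·a. If a > 0 or t ≠ 0, then a − 2⟨g,t⟩ + β‖t‖² > 0. -/
open RealInnerProductSpace

/-- **Coercivity of the Nitsche cell bilinear form.** In a real inner product space,
if `‖g‖² ≤ C·a` with `a, C ≥ 0` and the penalty parameter satisfies `β > C`, then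
whenever `a > 0` or `t ≠ 0` one has `a − 2⟨g,t⟩ + β‖t‖² > 0`. -/
theorem nitsche_coercivity
    {W : Type*} [NormedAddCommGroup W] [InnerProductSpace ℝ W]
    (g t : W) (a C β : ℝ) (ha : 0 ≤ a) (hC : 0 ≤ C) (hβ : β > C)
    (hg : ‖g‖ ^ 2 ≤ C * a) (hnz : 0 < a ∨ t ≠ 0) :
    0 < a - 2 * ⟪g, t⟫ + β * ‖t‖ ^ 2 := by
  have hβ0 : 0 < β := hC.trans_lt hβ
  have hsq : ‖g - β • t‖ ^ 2 = ‖g‖ ^ 2 - 2 * (β * ⟪g, t⟫) + β ^ 2 * ‖t‖ ^ 2 := by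
    rw [norm_sub_sq_real, inner_smul_right, norm_smul, mul_pow, Real.norm_eq_abs, sq_abs]
  refine pos_of_mul_pos_right (a := β) ?_ hβ0.le
  rcases ha.eq_or_lt with rfl | ha
  · have hg0 : g = 0 := by simpa using hg
    have ht : 0 < ‖t‖ := norm_pos_iff.mpr (hnz.resolve_left (lt_irrefl 0))
    simp only [hg0, inner_zero_left]
    ring_nf
    positivity
  · nlinarith [sq_nonneg ‖g - β • t‖, mul_pos (sub_pos.mpr hβ) ha]
end
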